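/- arXiv:math/0509362 — 2 statements merged into one kernel-verified Lean document; each statement's English description precedes it below -/
import Mathlib

section
/- Let (W, S) be an arbitrary Coxeter system, let w ∈ W_c be fully commutative and let s ∈ S be such that ℓ(sw) > ℓ(w) and sw is not fully commutative. Then there exist t ∈ S with 3 ≤ m(s,t) < ∞ and a reduced factorization w = w₁w₂w₃ such that (a) every generator occurring in a reduced word for w₁ is distinct from s and commutes with s, and (b) w₂ is the alternating product t s t s ⋯ of length m(s,t) − 1 beginning with t. Consequently sw admits reduced factorizations s·w₁·w₂·w₃ and w₁·(s w₂)·w₃. -/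
open CoxeterSystem

variable {B W : Type*} [Group W] {M : CoxeterMatrix B} (cs : CoxeterSystem M W)

/-- `m(s,t) ≥ 3`: `s` and `t` are distinct noncommuting generators
(`M s t = 0` encodes `m(s,t) = ∞`). -/
def Noncomm (M : CoxeterMatrix B) (s t : B) : Prop := M s t = 0 ∨ 3 ≤ M s t

/-- The longest element `w_{st}` of the rank-2 parabolic subgroup `⟨s,t⟩`
(meaningful when `3 ≤ M s t < ∞`). -/
def longest (s t : B) : W := cs.wordProd (alternatingWord s t (M s t))

/-- `w` is complex: it admits a reduced factorization `x₁ · w_{st} · x₂` where `w_{st}`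
is the longest element of a rank-2 parabolic subgroup `⟨s,t⟩` with `3 ≤ m(s,t) < ∞`. -/
def IsComplex (w : W) : Prop :=
  ∃ s t : B, 3 ≤ M s t ∧ ∃ x₁ x₂ : W,
    w = x₁ * longest cs s t * x₂ ∧
    cs.length w = cs.length x₁ + cs.length (longest cs s t : W) + cs.length x₂

/-- `w` is fully commutative, i.e. `w ∈ W_c`. -/
def FullyComm (w : W) : Prop := ¬ IsComplex cs w

/-- `x` is weakly complex: `x` is complex and `x = s·u` reduced with `u` fully commutative. -/
def IsWeaklyComplex (x : W) : Prop :=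
  IsComplex cs x ∧ ∃ (s : B) (u : W), FullyComm cs u ∧ x = cs.simple s * u ∧
    cs.length x = 1 + cs.length u

/-- The alternating product `t s t s ⋯` with `k` factors, beginning with `t`. -/
def altProd (t s : B) (k : ℕ) : W :=
  cs.wordProd ((List.range k).map (fun i => if i % 2 = 0 then t else s))

/-- The left descent set `𝓛(w)`. -/
def leftDescents (w : W) : Set B := {i | cs.IsLeftDescent w i}

/-- The right descent set `𝓡(w)`. -/
def rightDescents (w : W) : Set B := {i | cs.IsRightDescent w i}

/-- `w` is a reduced product of distinct pairwise commuting generators. -/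
def IsCommProd (w : W) : Prop :=
  ∃ l : List B, l.Nodup ∧ (∀ u ∈ l, ∀ u' ∈ l, u ≠ u' → M u u' = 2) ∧
    cs.IsReduced l ∧ w = cs.wordProd l

/-- `y` is left star reducible to `x` with respect to the pair `{s,t}`:
`x` and `y` lie in the same left `{s,t}`-string and `ℓ(x) = ℓ(y) − 1`. -/
def LeftStarReducible (s t : B) (y x : W) : Prop :=
  Noncomm M s t ∧
  ((cs.IsLeftDescent y s ∧ ¬ cs.IsLeftDescent y t ∧ x = cs.simple s * y ∧
      cs.IsLeftDescent x t) ∨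
   (cs.IsLeftDescent y t ∧ ¬ cs.IsLeftDescent y s ∧ x = cs.simple t * y ∧
      cs.IsLeftDescent x s))

/-- `y` is right star reducible to `x` with respect to the pair `{s,t}`. -/
def RightStarReducible (s t : B) (y x : W) : Prop :=
  Noncomm M s t ∧
  ((cs.IsRightDescent y s ∧ ¬ cs.IsRightDescent y t ∧ x = y * cs.simple s ∧
      cs.IsRightDescent x t) ∨
   (cs.IsRightDescent y t ∧ ¬ cs.IsRightDescent y s ∧ x = y * cs.simple t ∧
      cs.IsRightDescent x s))

/-- `y` is star reducible to `x`: there is a (possibly empty) chain of left and right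
star reductions from `y` to `x`. -/
def StarReducible (y x : W) : Prop :=
  Relation.ReflTransGen
    (fun a b => ∃ s t : B, LeftStarReducible cs s t a b ∨ RightStarReducible cs s t a b) y x

/-- Property F: every fully commutative element is star reducible to a reduced product of
distinct pairwise commuting generators. -/
def PropertyF : Prop := ∀ w : W, FullyComm cs w → ∃ x : W, StarReducible cs w x ∧ IsCommProd cs x

/-- `n(w)`: the maximum `k` such that `w` admits a reduced factorization `w = w₁·w₂·w₃`
with `w₂` a reduced product of `k` distinct pairwise commuting generators. -/
noncomputable def nval (w : W) : ℕ :=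
  sSup {k | ∃ w₁ w₂ w₃ : W, w = w₁ * w₂ * w₃ ∧
    cs.length w = cs.length w₁ + cs.length w₂ + cs.length w₃ ∧
    IsCommProd cs w₂ ∧ cs.length w₂ = k}

/-- The Bruhat order: `x ≤ w` iff some reduced word for `w` has a subword that is a
reduced word for `x`. -/
def BruhatLE (x w : W) : Prop :=
  ∃ l l' : List B, cs.IsReduced l ∧ cs.wordProd l = w ∧
    l'.Sublist l ∧ cs.IsReduced l' ∧ cs.wordProd l' = x

/-- `w = wI · wII` is the coset decomposition of `w` with respect to `I = {s,t}`:
`wI ∈ W_I`, `𝓛(wII) ∩ I = ∅` and `ℓ(w) = ℓ(wI) + ℓ(wII)`. -/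
def CosetDecompL (s t : B) (w wI wII : W) : Prop :=
  w = wI * wII ∧ wI ∈ Subgroup.closure {cs.simple s, cs.simple t} ∧
  ¬ cs.IsLeftDescent wII s ∧ ¬ cs.IsLeftDescent wII t ∧
  cs.length w = cs.length wI + cs.length wII

/-- `w = wII · wI` is the right coset decomposition of `w` with respect to `I = {s,t}`:
`wI ∈ W_I`, `𝓡(wII) ∩ I = ∅` and `ℓ(w) = ℓ(wII) + ℓ(wI)`. -/
def CosetDecompR (s t : B) (w wII wI : W) : Prop :=
  w = wII * wI ∧ wI ∈ Subgroup.closure {cs.simple s, cs.simple t} ∧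
  ¬ cs.IsRightDescent wII s ∧ ¬ cs.IsRightDescent wII t ∧
  cs.length w = cs.length wII + cs.length wI

/-- `k_ε(J) = (−1)^{|J ∩ ε⁻¹(0)|}` for a set `J` of generators. -/
noncomputable def kSet (ε : B → Bool) (J : Set B) : ℤ :=
  (-1) ^ (J ∩ {i | ε i = false}).ncard

/-- `k_ε(w) = k_ε(𝓛(w)) · k_ε(𝓡(w))`. -/
noncomputable def kElt (ε : B → Bool) (w : W) : ℤ :=
  kSet ε (leftDescents cs w) * kSet ε (rightDescents cs w)

namespace CoxeterSystem

open List

/-! ### The exchange property -/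

/-- The involution `f ↦ (t ↦ [t = sᵢ] + f (sᵢ t sᵢ))` of the functions `W → ℤ/2`. -/
noncomputable def invParityStep (i : B) : Function.End (W → ZMod 2) := by
  classical
  exact fun f t ↦ (if t = cs.simple i then 1 else 0) + f (cs.simple i * t * cs.simple i)

open scoped Classical in
lemma prod_invParityStep_apply (ω : List B) (f : W → ZMod 2) (t : W) :
    (ω.map (invParityStep cs)).prod f t =
      ((cs.leftInvSeq ω).count t : ZMod 2) + f ((cs.wordProd ω)⁻¹ * t * cs.wordProd ω) := by
  induction ω generalizing f t with
  | nil => simp; rfl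
  | cons i ω ih =>
    have hcount : ((cs.leftInvSeq ω).map (MulAut.conj (cs.simple i))).count t =
        (cs.leftInvSeq ω).count (cs.simple i * t * cs.simple i) := by
      have := List.count_map_of_injective (cs.leftInvSeq ω) (MulAut.conj (cs.simple i))
        (MulAut.conj (cs.simple i)).injective (cs.simple i * t * cs.simple i)
      simpa [mul_assoc] using this
    rw [List.map_cons, List.prod_cons]
    change invParityStep cs i ((ω.map (invParityStep cs)).prod f) t = _
    simp only [invParityStep, ih, leftInvSeq, List.count_cons, hcount, wordProd_cons, mul_inv_rev,
      inv_simple, beq_iff_eq, eq_comm (a := t)]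
    push_cast
    simp only [mul_assoc]
    split_ifs <;> ring

open scoped Classical in
lemma even_count_leftInvSeq_alternatingWord (i j : B) (t : W) :
    Even ((cs.leftInvSeq (alternatingWord i j (2 * M i j))).count t) := by
  set g : ℕ → W := fun k ↦ cs.wordProd (alternatingWord j i (2 * k + 1)) with hg
  have hlis : cs.leftInvSeq (alternatingWord i j (2 * M i j)) =
      (List.range (2 * M i j)).map g := by
    apply List.ext_getElem
    · simp
    · intro k h₁ h₂
      rw [cs.getElem_leftInvSeq_alternatingWord i j (M i j) k (by simpa using h₁)]
      simp [hg]
  have hper (k : ℕ) : g (M i j + k) = g k := by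
    simp only [hg, prod_alternatingWord_eq_mul_pow]
    rw [show (2 * (M i j + k) + 1) / 2 = M i j + k by lia, show (2 * k + 1) / 2 = k by lia,
      pow_add, simple_mul_simple_pow', one_mul]
    simp
  rw [hlis, two_mul, List.range_add, List.map_append, List.map_map, List.count_append,
    show g ∘ (fun x ↦ M i j + x) = g from funext hper]
  exact ⟨_, rfl⟩

lemma isLiftable_invParityStep : M.IsLiftable (invParityStep cs) := by
  classical
  intro i j
  have hprod : (invParityStep cs i * invParityStep cs j) ^ M i j =
      ((alternatingWord i j (2 * M i j)).map (invParityStep cs)).prod := by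
    induction M i j with
    | zero => simp [alternatingWord]
    | succ n ih =>
      rw [pow_succ, ih, show 2 * (n + 1) = 2 * n + 1 + 1 by ring, alternatingWord_succ,
        alternatingWord_succ]
      simp
  have hone : cs.wordProd (alternatingWord i j (2 * M i j)) = 1 := by
    simp [prod_alternatingWord_eq_mul_pow]
  rw [hprod]
  funext f t
  rw [prod_invParityStep_apply, hone,
    (ZMod.natCast_eq_zero_iff_even).mpr (even_count_leftInvSeq_alternatingWord cs i j t)]
  simp
  rfl

/-- **Exchange property**: a left descent of `π ω` occurs in the left inversion sequence of `ω`. -/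
theorem IsLeftDescent.simple_mem_leftInvSeq {ω : List B} {j : B}
    (hj : cs.IsLeftDescent (cs.wordProd ω) j) : cs.simple j ∈ cs.leftInvSeq ω := by
  classical
  obtain ⟨ω', hω', hprod⟩ := cs.exists_isReduced (cs.simple j * cs.wordProd ω)
  have hw : cs.wordProd (j :: ω') = cs.wordProd ω := by
    rw [wordProd_cons, ← hprod, simple_mul_simple_cancel_left]
  have hred : cs.IsReduced (j :: ω') := by
    have := cs.isLeftDescent_iff.mp hj
    rw [hprod, hω'.eq] at this
    rw [IsReduced, hw, ← this, List.length_cons]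
  have hlift (ω : List B) : (ω.map (invParityStep cs)).prod =
      cs.lift ⟨_, isLiftable_invParityStep cs⟩ (cs.wordProd ω) := by
    rw [wordProd, map_list_prod, List.map_map]
    congr 1
    exact List.map_congr_left fun i _ ↦ (cs.lift_apply_simple _ i).symm
  have hcount : (((cs.leftInvSeq (j :: ω')).count (cs.simple j) : ℕ) : ZMod 2) =
      ((cs.leftInvSeq ω).count (cs.simple j) : ℕ) := by
    have h₁ := prod_invParityStep_apply cs (j :: ω') 0 (cs.simple j)
    have h₂ := prod_invParityStep_apply cs ω 0 (cs.simple j)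
    rw [hlift] at h₁ h₂
    rw [hw] at h₁
    simpa using h₁.symm.trans h₂
  rw [List.count_eq_one_of_mem hred.nodup_leftInvSeq (by simp [leftInvSeq])] at hcount
  by_contra hmem
  rw [List.count_eq_zero_of_not_mem hmem] at hcount
  simp at hcount

lemma leftInvSeq_append (ω ω' : List B) : cs.leftInvSeq (ω ++ ω') =
    cs.leftInvSeq ω ++ (cs.leftInvSeq ω').map (MulAut.conj (cs.wordProd ω)) := by
  induction ω with
  | nil => simp [leftInvSeq]
  | cons i ω ih => simp [leftInvSeq, ih, wordProd_cons]

end CoxeterSystem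

namespace CoxeterSystem

/-! ### The geometric representation and the order of a product of two generators -/

/-- The linear form `2 B(eᵢ, ·)` on `B →₀ ℝ`, where `B(eᵢ, eⱼ) = -cos (π / m(i,j))`
(which is `-1` if `m(i,j) = ∞`). -/
noncomputable def simpleCoroot (M : CoxeterMatrix B) (i : B) : Module.Dual ℝ (B →₀ ℝ) :=
  Finsupp.linearCombination ℝ fun j ↦ -2 * Real.cos (Real.pi / M i j)

lemma simpleCoroot_single (i j : B) :
    simpleCoroot M i (Finsupp.single j 1) = -2 * Real.cos (Real.pi / M i j) := by
  simp [simpleCoroot]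

lemma simpleCoroot_self (i : B) : simpleCoroot M i (Finsupp.single i 1) = 2 := by
  simp [simpleCoroot_single]

/-- The simple reflections of the geometric representation. -/
noncomputable def simpleReflection (M : CoxeterMatrix B) (i : B) :
    (B →₀ ℝ) ≃ₗ[ℝ] (B →₀ ℝ) :=
  Module.reflection (simpleCoroot_self (M := M) i)

lemma simpleCoroot_mul_simpleCoroot (i j : B) :
    2 * Real.cos (2 * Real.pi / M i j) =
      simpleCoroot M i (Finsupp.single j 1) * simpleCoroot M j (Finsupp.single i 1) - 2 := by
  rw [simpleCoroot_single, simpleCoroot_single, M.symmetric j i, mul_div_assoc, Real.cos_two_mul]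
  ring

lemma sin_two_pi_div_pos {m : ℕ} (hm : 3 ≤ m) : 0 < Real.sin (2 * Real.pi / m) := by
  have hm' : (3 : ℝ) ≤ m := by exact_mod_cast hm
  have hpi := Real.pi_pos
  apply Real.sin_pos_of_pos_of_lt_pi
  · positivity
  · rw [div_lt_iff₀ (by linarith)]
    nlinarith

lemma isLiftable_simpleReflection : M.IsLiftable (simpleReflection M) := by
  intro i j
  obtain rfl | hij := eq_or_ne i j
  · rw [M.diagonal, pow_one, mul_eq_one_iff_eq_inv, simpleReflection, Module.reflection_inv]
  refine LinearEquiv.ext fun z ↦ ?_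
  rw [simpleReflection, simpleReflection, Module.reflection_mul_reflection_pow_apply _ _ _ _ _
    (simpleCoroot_mul_simpleCoroot i j)]
  have h1 : M i j ≠ 1 := M.off_diagonal i j hij
  generalize hm : M i j = m at *
  have hpi := Real.pi_pos
  obtain rfl | rfl | hm3 : m = 0 ∨ m = 2 ∨ 3 ≤ m := by lia
  · simp
  · have h0 : simpleCoroot M i (Finsupp.single j 1) = 0 := by simp [simpleCoroot_single, hm]
    have h0' : simpleCoroot M j (Finsupp.single i 1) = 0 := by
      simp [simpleCoroot_single, M.symmetric j i, hm]
    norm_num [h0, h0']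
    module
  · set θ := 2 * Real.pi / m with hθ
    have hsin : Real.sin θ ≠ 0 := (sin_two_pi_div_pos hm3).ne'
    have hmθ : m * θ = 2 * Real.pi := by
      rw [hθ]; field_simp
    have hS (n : ℤ) := Polynomial.Chebyshev.S_two_mul_real_cos θ n
    obtain ⟨k, rfl | rfl⟩ := m.even_or_odd'
    · have hk : (Polynomial.Chebyshev.S ℝ (k - 1)).eval (2 * Real.cos θ) = 0 := by
        have := hS (k - 1)
        push_cast at this hmθ
        rw [show ((k : ℝ) - 1 + 1) * θ = Real.pi by linarith, Real.sin_pi] at this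
        exact (mul_eq_zero.mp this).resolve_right hsin
      rw [show (((2 * k : ℕ) : ℤ) - 2) / 2 = k - 1 by lia,
        show (((2 * k : ℕ) : ℤ) - 1) / 2 = k - 1 by lia, hk]
      simp
    · have hk : (Polynomial.Chebyshev.S ℝ k).eval (2 * Real.cos θ) +
          (Polynomial.Chebyshev.S ℝ (k - 1)).eval (2 * Real.cos θ) = 0 := by
        have h₁ := hS (k - 1)
        have h₂ := hS k
        push_cast at h₁ h₂ hmθ
        rw [show ((k : ℝ) + 1) * θ = 2 * Real.pi - k * θ by linarith,
          Real.sin_two_pi_sub] at h₂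
        rw [sub_add_cancel] at h₁
        refine (mul_eq_zero.mp ?_).resolve_right hsin
        rw [add_mul, h₁, h₂, neg_add_cancel]
      rw [show (((2 * k + 1 : ℕ) : ℤ) - 2) / 2 = k - 1 by lia,
        show (((2 * k + 1 : ℕ) : ℤ) - 1) / 2 = k by lia,
        show (((2 * k + 1 : ℕ) : ℤ) - 3) / 2 = k - 1 by lia,
        show (((2 * k + 1 : ℕ) : ℤ)) / 2 = k by lia, hk]
      simp

lemma simpleReflection_mul_pow_ne_one {i j : B} (hij : i ≠ j) {k : ℕ} (hk : 0 < k)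
    (hkM : M i j = 0 ∨ k < M i j) :
    (simpleReflection M i * simpleReflection M j) ^ k ≠ 1 := by
  intro hone
  have happ := Module.reflection_mul_reflection_pow_apply_self (simpleCoroot_self (M := M) i)
    (simpleCoroot_self (M := M) j) k _ (simpleCoroot_mul_simpleCoroot i j)
  change ((simpleReflection M i * simpleReflection M j) ^ k) _ = _ at happ
  rw [hone, LinearEquiv.coe_one, id] at happ
  have hi := DFunLike.congr_fun happ i
  have hj := DFunLike.congr_fun happ j
  simp [hij, hij.symm] at hi hj
  have hg : simpleCoroot M j (Finsupp.single i 1) = -2 * Real.cos (Real.pi / M i j) := by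
    rw [simpleCoroot_single, M.symmetric j i]
  rw [hg] at hj
  have h1 : M i j ≠ 1 := M.off_diagonal i j hij
  generalize hm : M i j = m at *
  have hpi := Real.pi_pos
  obtain rfl | rfl | hm3 : m = 0 ∨ m = 2 ∨ 3 ≤ m := by lia
  · simp at hi
    norm_cast at hi
    lia
  · obtain rfl : k = 1 := by lia
    norm_num at hi
  · set θ := 2 * Real.pi / m with hθ
    have hsin : Real.sin θ ≠ 0 := (sin_two_pi_div_pos hm3).ne'
    have hm3' : (3 : ℝ) ≤ m := by exact_mod_cast hm3
    have hcos : Real.cos (Real.pi / m) ≠ 0 := by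
      refine (Real.cos_pos_of_mem_Ioo ⟨?_, ?_⟩).ne'
      · have : 0 < Real.pi / m := by positivity
        linarith
      · rw [div_lt_iff₀ (by linarith)]
        nlinarith
    have hS := Polynomial.Chebyshev.S_two_mul_real_cos θ
    have hk0 : (Polynomial.Chebyshev.S ℝ (k - 1)).eval (2 * Real.cos θ) = 0 := by
      simpa [hcos] using hj
    have h₁ := hS (k - 1)
    have h₂ := hS k
    rw [hk0, add_zero] at hi
    rw [hk0] at h₁
    rw [← hi] at h₂
    push_cast at h₁ h₂
    rw [sub_add_cancel, zero_mul] at h₁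
    rw [add_mul, one_mul, one_mul, Real.sin_add, ← h₁, zero_mul, zero_add] at h₂
    have hcos1 : Real.cos (k * θ) = 1 := by
      have : (Real.cos (k * θ) - 1) * Real.sin θ = 0 := by linarith
      exact sub_eq_zero.mp ((mul_eq_zero.mp this).resolve_right hsin)
    have hkm : (k : ℝ) < m := by
      have : k < m := by lia
      exact_mod_cast this
    have hk' : (0 : ℝ) < k := by exact_mod_cast hk
    have hpos : 0 < k * θ := by positivity
    have hlt : k * θ < 2 * Real.pi := by
      rw [hθ, mul_div_assoc', div_lt_iff₀ (by linarith)]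
      nlinarith
    exact hpos.ne' ((Real.cos_eq_one_iff_of_lt_of_lt (by linarith) hlt).mp hcos1)

/-- The order of `sᵢ sⱼ` is at least `m(i,j)`. -/
theorem simple_mul_simple_pow_ne_one {i j : B} (hij : i ≠ j) {k : ℕ} (hk : 0 < k)
    (hkM : M i j = 0 ∨ k < M i j) : (cs.simple i * cs.simple j) ^ k ≠ 1 := by
  intro h
  have := congrArg (cs.lift ⟨simpleReflection M, isLiftable_simpleReflection⟩) h
  rw [map_pow, map_mul, lift_apply_simple, lift_apply_simple, map_one] at this
  exact simpleReflection_mul_pow_ne_one hij hk hkM this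

end CoxeterSystem

namespace CoxeterSystem

/-! ### Alternating words -/

/-- The alternating word `t s t s ⋯` with `k` letters, beginning with `t`. -/
def altWord (t s : B) (k : ℕ) : List B :=
  (List.range k).map fun i ↦ if i % 2 = 0 then t else s

lemma altWord_succ (t s : B) (k : ℕ) : altWord t s (k + 1) = t :: altWord s t k := by
  simp only [altWord, List.range_succ_eq_map, List.map_cons, List.map_map, Nat.zero_mod, if_true]
  congr 2
  funext i
  simp only [Function.comp_apply, Nat.succ_eq_add_one]
  split_ifs <;> first | rfl | lia

lemma length_altWord (t s : B) (k : ℕ) : (altWord t s k).length = k := by simp [altWord]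

lemma eq_or_eq_of_mem_altWord {t s u : B} {k : ℕ} (hu : u ∈ altWord t s k) : u = t ∨ u = s := by
  simp only [altWord, List.mem_map] at hu
  obtain ⟨i, -, rfl⟩ := hu
  split_ifs <;> simp

lemma altWord_eq_alternatingWord (t s : B) (k : ℕ) :
    altWord t s k = if Even k then alternatingWord t s k else alternatingWord s t k := by
  apply List.ext_getElem
  · split_ifs <;> simp [altWord]
  · intro n h₁ h₂
    have hn : n < k := by simpa [altWord] using h₁
    split_ifs with hk
    · rw [getElem_alternatingWord t s k n hn]
      simp only [altWord, List.getElem_map, List.getElem_range, Nat.even_add, hk, true_iff,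
        ← Nat.even_iff]
    · rw [getElem_alternatingWord s t k n hn]
      simp only [altWord, List.getElem_map, List.getElem_range, Nat.even_add, hk, false_iff,
        ← Nat.even_iff]
      split_ifs <;> simp_all

lemma wordProd_altWord (t s : B) (k : ℕ) : cs.wordProd (altWord t s k) = altProd cs t s k := rfl

lemma altProd_zero (t s : B) : altProd cs t s 0 = 1 := by simp [altProd]

lemma altProd_succ (t s : B) (k : ℕ) :
    altProd cs t s (k + 1) = cs.simple t * altProd cs s t k := by
  rw [← wordProd_altWord, altWord_succ, wordProd_cons, wordProd_altWord]

lemma length_altProd_le (t s : B) (k : ℕ) : cs.length (altProd cs t s k) ≤ k := by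
  rw [← wordProd_altWord]
  exact (cs.length_wordProd_le _).trans_eq (length_altWord t s k)

lemma altProd_eq_longest (s t : B) : altProd cs s t (M s t) = longest cs s t := by
  have hbraid := cs.wordProd_braidWord_eq s t
  rw [braidWord, braidWord, M.symmetric t s] at hbraid
  rw [← wordProd_altWord, altWord_eq_alternatingWord, longest]
  split_ifs
  · rfl
  · exact hbraid.symm

lemma longest_comm (s t : B) : longest cs s t = longest cs t s := by
  have hbraid := cs.wordProd_braidWord_eq s t
  rwa [braidWord, braidWord] at hbraid

lemma altProd_comm (s t : B) : altProd cs s t (M s t) = altProd cs t s (M s t) := by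
  rw [altProd_eq_longest, longest_comm, ← altProd_eq_longest, M.symmetric]

lemma exists_of_mem_leftInvSeq_altWord {i j : B} {k : ℕ} {r : W}
    (hr : r ∈ cs.leftInvSeq (altWord i j k)) :
    ∃ p < k, r = (cs.simple i * cs.simple j) ^ p * cs.simple i := by
  induction k generalizing i j r with
  | zero => simp [altWord] at hr
  | succ k ih =>
    rw [altWord_succ, leftInvSeq, List.mem_cons, List.mem_map] at hr
    obtain rfl | ⟨r', hr', rfl⟩ := hr
    · exact ⟨0, by simp⟩
    · obtain ⟨p, hp, rfl⟩ := ih hr'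
      refine ⟨p + 1, by lia, ?_⟩
      have hswap (p : ℕ) : cs.simple i * (cs.simple j * cs.simple i) ^ p =
          (cs.simple i * cs.simple j) ^ p * cs.simple i := by
        induction p with
        | zero => simp
        | succ p ih => rw [pow_succ, ← mul_assoc, ih, pow_succ]; simp only [mul_assoc]
      rw [MulAut.conj_apply, inv_simple, ← mul_assoc, hswap, pow_succ]
      simp only [mul_assoc]

lemma simple_notMem_leftInvSeq_altWord {i j : B} (hij : i ≠ j) {k : ℕ}
    (hk : M i j = 0 ∨ k < M i j) : cs.simple j ∉ cs.leftInvSeq (altWord i j k) := by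
  intro hmem
  obtain ⟨p, hp, hj⟩ := exists_of_mem_leftInvSeq_altWord cs hmem
  refine cs.simple_mul_simple_pow_ne_one hij (Nat.succ_pos p) (hk.imp_right fun h ↦ by lia) ?_
  rw [pow_succ, ← mul_assoc, ← hj, simple_mul_simple_self]

lemma length_altProd {i j : B} (hij : i ≠ j) {k : ℕ} (hk : M i j = 0 ∨ k ≤ M i j) :
    cs.length (altProd cs i j k) = k := by
  induction k generalizing i j with
  | zero => simp [altProd_zero]
  | succ k ih =>
    rw [M.symmetric] at hk
    have hdesc : ¬ cs.IsLeftDescent (altProd cs j i k) i := fun h ↦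
      simple_notMem_leftInvSeq_altWord cs hij.symm (hk.imp_right fun h ↦ by lia)
        (IsLeftDescent.simple_mem_leftInvSeq cs h)
    rw [altProd_succ, cs.not_isLeftDescent_iff.mp hdesc,
      ih hij.symm (hk.imp_right fun h ↦ by lia)]

/-! ### Elements with two left descents -/

lemma exists_eq_altProd_mul {w : W} {i j : B} (hij : i ≠ j) (hi : cs.IsLeftDescent w i)
    (hj : cs.IsLeftDescent w j) {k : ℕ} (hk : M i j = 0 ∨ k ≤ M i j) :
    ∃ x, w = altProd cs i j k * x ∧ cs.length w = k + cs.length x := by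
  induction k generalizing i j with
  | zero => exact ⟨w, by simp [altProd_zero]⟩
  | succ k ih =>
    rw [M.symmetric] at hk
    obtain ⟨x, hx, hlen⟩ := ih hij.symm hj hi (hk.imp_right fun h ↦ by lia)
    obtain ⟨ω, hω, rfl⟩ := cs.exists_isReduced x
    have hi' := hi
    rw [hx, ← wordProd_altWord, ← wordProd_append] at hi'
    have hmem := IsLeftDescent.simple_mem_leftInvSeq cs hi'
    rw [leftInvSeq_append, List.mem_append, List.mem_map] at hmem
    obtain hmem | ⟨r, hr, hconj⟩ := hmem
    · exact absurd hmem (simple_notMem_leftInvSeq_altWord cs hij.symm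
        (hk.imp_right fun h ↦ by lia))
    · have hlt := (cs.isLeftInversion_of_mem_leftInvSeq hω hr).2
      rw [wordProd_altWord, MulAut.conj_apply] at hconj
      have hw : w = altProd cs i j (k + 1) * (r * cs.wordProd ω) := by
        calc w = cs.simple i * (cs.simple i * w) := by simp
          _ = _ := by
            nth_rw 2 [← hconj]
            rw [hx, altProd_succ]
            group
      refine ⟨_, hw, ?_⟩
      have h₁ := cs.length_mul_le (altProd cs i j (k + 1)) (r * cs.wordProd ω)
      have h₂ := length_altProd_le cs i j (k + 1)
      rw [← hw] at h₁
      lia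

/-- An element with two distinct left descents `i`, `j` is left divisible by the longest element
of `⟨sᵢ, sⱼ⟩`, which is finite. -/
theorem exists_eq_longest_mul {w : W} {i j : B} (hij : i ≠ j) (hi : cs.IsLeftDescent w i)
    (hj : cs.IsLeftDescent w j) :
    2 ≤ M i j ∧ ∃ x, w = altProd cs i j (M i j) * x ∧ cs.length w = M i j + cs.length x := by
  refine ⟨?_, exists_eq_altProd_mul cs hij hi hj (Or.inr le_rfl)⟩
  have h1 := M.off_diagonal i j hij
  by_contra h
  obtain ⟨x, -, hx⟩ := exists_eq_altProd_mul cs hij hi hj (k := cs.length w + 1) (Or.inl (by lia))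
  lia

/-- Two reduced words for the same element involve the same generators. -/
theorem mem_of_wordProd_eq {l l' : List B} (hl : cs.IsReduced l) (hl' : cs.IsReduced l')
    (h : cs.wordProd l = cs.wordProd l') {u : B} (hu : u ∈ l) : u ∈ l' := by
  have hlen : l.length = l'.length := by rw [← hl.eq, ← hl'.eq, h]
  generalize hn : l.length = n at hlen
  induction n generalizing l l' u with
  | zero =>
    rw [List.length_eq_zero_iff.mp hn] at hu
    simp at hu
  | succ n ih =>
    match l, l' with
    | [], _ => simp at hu
    | _, [] => simp at hlen
    | i :: a, j :: b =>
      have ha : cs.IsReduced a := hl.drop 1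
      have hb : cs.IsReduced b := hl'.drop 1
      simp only [List.length_cons, Nat.add_right_cancel_iff] at hn hlen
      obtain rfl | hij := eq_or_ne i j
      · rw [wordProd_cons, wordProd_cons, mul_right_inj] at h
        obtain rfl | hu := List.mem_cons.mp hu
        · simp
        · exact List.mem_cons_of_mem _ (ih ha hb h hu hn hlen)
      · have hwlen : cs.length (cs.wordProd (i :: a)) = n + 1 := by
          rw [hl.eq, List.length_cons, hn]
        have hi : cs.IsLeftDescent (cs.wordProd (i :: a)) i := by
          rw [cs.isLeftDescent_iff, hwlen, wordProd_cons, simple_mul_simple_cancel_left, ha.eq, hn]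
        have hj : cs.IsLeftDescent (cs.wordProd (i :: a)) j := by
          rw [cs.isLeftDescent_iff, hwlen, h, wordProd_cons, simple_mul_simple_cancel_left, hb.eq,
            hlen]
        obtain ⟨hM, x, hx, hxlen⟩ := exists_eq_longest_mul cs hij hi hj
        obtain ⟨c, hc, rfl⟩ := cs.exists_isReduced x
        rw [hc.eq, hwlen] at hxlen
        obtain ⟨m, hm⟩ : ∃ m, M i j = m + 2 := ⟨M i j - 2, by lia⟩
        have hx' := hx
        rw [altProd_comm, h, wordProd_cons, hm, altProd_succ, mul_assoc, mul_right_inj] at hx'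
        rw [wordProd_cons, hm, altProd_succ, mul_assoc, mul_right_inj] at hx
        rw [← wordProd_altWord, ← wordProd_append] at hx hx'
        have hreda : cs.IsReduced (altWord j i (m + 1) ++ c) := by
          rw [IsReduced, ← hx, ha.eq, List.length_append, length_altWord]
          lia
        have hredb : cs.IsReduced (altWord i j (m + 1) ++ c) := by
          rw [IsReduced, ← hx', hb.eq, List.length_append, length_altWord]
          lia
        have hib {v : B} (hv : v ∈ altWord i j (m + 1) ++ c) : v ∈ b :=
          ih hredb hb hx'.symm hv (by simp [length_altWord]; lia) hlen
        have hi_mem : i ∈ b := hib (by simp [altWord_succ])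
        obtain rfl | hu := List.mem_cons.mp hu
        · exact List.mem_cons_of_mem _ hi_mem
        · obtain hu | hu := List.mem_append.mp
            (ih ha hreda hx hu hn (by simp [length_altWord]; lia))
          · obtain rfl | rfl := eq_or_eq_of_mem_altWord hu
            · simp
            · exact List.mem_cons_of_mem _ hi_mem
          · exact List.mem_cons_of_mem _ (hib (List.mem_append_right _ hu))

/-! ### Complex elements -/

lemma commute_simple_of_eq_two {i j : B} (h : M i j = 2) :
    Commute (cs.simple i) (cs.simple j) := by
  have hpow := cs.simple_mul_simple_pow i j
  rw [h, pow_two] at hpow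
  have := eq_inv_of_mul_eq_one_left hpow
  simpa [Commute, SemiconjBy] using this

lemma isComplex_of_eq_mul_longest_mul {w x₂ : W} {ω : List B} {a b : B} (hab : 3 ≤ M a b)
    (hw : w = cs.wordProd ω * longest cs a b * x₂)
    (hlen : ω.length + cs.length (longest cs a b) + cs.length x₂ ≤ cs.length w) :
    IsComplex cs w := by
  refine ⟨a, b, hab, cs.wordProd ω, x₂, hw, ?_⟩
  have h₁ := cs.length_mul_le (cs.wordProd ω * longest cs a b) x₂
  have h₂ := cs.length_mul_le (cs.wordProd ω) (longest cs a b)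
  have h₃ := cs.length_wordProd_le ω
  rw [← hw] at h₁
  lia

lemma IsComplex.simple_mul {w : W} {c : B} (hw : IsComplex cs w)
    (hc : cs.length w < cs.length (cs.simple c * w)) : IsComplex cs (cs.simple c * w) := by
  obtain ⟨a, b, hab, x₁, x₂, rfl, hlen⟩ := hw
  obtain ⟨ω, hω, rfl⟩ := cs.exists_isReduced x₁
  refine isComplex_of_eq_mul_longest_mul cs (ω := c :: ω) hab ?_ (x₂ := x₂) ?_
  · rw [wordProd_cons]; simp only [mul_assoc]
  · rw [hω.eq] at hlen
    rw [List.length_cons]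
    lia

/-- The conclusion of the factorization theorem, in terms of a word `l` for the first factor. -/
def HasBraidFactorization (w : W) (s : B) : Prop :=
  ∃ t : B, 3 ≤ M s t ∧ ∃ (l : List B) (w₃ : W), (∀ u ∈ l, u ≠ s ∧ M s u = 2) ∧
    w = cs.wordProd l * altProd cs t s (M s t - 1) * w₃ ∧
    cs.length w = l.length + (M s t - 1) + cs.length w₃

section

variable {cs} {w : W} {s c : B}

lemma hasBraidFactorization_of_isLeftDescent (hlen : cs.length w < cs.length (cs.simple s * w))
    (hsc : s ≠ c) (hc : cs.IsLeftDescent (cs.simple s * w) c) (hM : M s c ≠ 2) :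
    HasBraidFactorization cs w s := by
  have hs : cs.IsLeftDescent (cs.simple s * w) s := by simpa [IsLeftDescent] using hlen
  obtain ⟨hM', x, hx, hxlen⟩ := exists_eq_longest_mul cs hsc hs hc
  rw [← Nat.sub_add_cancel (show 1 ≤ M s c by lia), altProd_succ, mul_assoc, mul_right_inj] at hx
  refine ⟨c, by lia, [], x, by simp, by simpa using hx, ?_⟩
  have := cs.length_simple_mul w s
  simp only [List.length_nil]
  lia

lemma exists_eq_simple_mul_of_isLeftDescent
    (hlen : cs.length w < cs.length (cs.simple s * w))
    (hsc : s ≠ c) (hc : cs.IsLeftDescent (cs.simple s * w) c) (hM : M s c = 2) :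
    ∃ x, w = cs.simple c * x ∧ cs.length w = cs.length x + 1 := by
  have hs : cs.IsLeftDescent (cs.simple s * w) s := by simpa [IsLeftDescent] using hlen
  obtain ⟨-, x, hx, hxlen⟩ := exists_eq_longest_mul cs hsc hs hc
  rw [hM, altProd_succ, altProd_succ, altProd_zero, mul_one, mul_assoc, mul_right_inj] at hx
  refine ⟨x, hx, ?_⟩
  have := cs.length_simple_mul w s
  lia

lemma isLeftDescent_longest_mul {a b : B} {x : W} (hab : 3 ≤ M a b)
    (hlen : cs.length (longest cs a b * x) = cs.length (longest cs a b) + cs.length x) :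
    cs.IsLeftDescent (longest cs a b * x) a := by
  have hne : a ≠ b := by
    rintro rfl
    simp at hab
  have hL : cs.length (longest cs a b) = M a b := by
    rw [← altProd_eq_longest, length_altProd cs hne (Or.inr le_rfl)]
  rw [IsLeftDescent, hlen, hL, ← altProd_eq_longest,
    ← Nat.sub_add_cancel (show 1 ≤ M a b by lia), altProd_succ, mul_assoc,
    simple_mul_simple_cancel_left]
  have h₁ := cs.length_mul_le (altProd cs b a (M a b - 1)) x
  have h₂ := length_altProd_le cs b a (M a b - 1)
  lia

lemma hasBraidFactorization_of_eq_longest_mul {a b : B} {x : W} (hw : FullyComm cs w)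
    (hlen : cs.length w < cs.length (cs.simple s * w)) (hab : 3 ≤ M a b)
    (hx : cs.simple s * w = longest cs a b * x)
    (hxlen : cs.length (cs.simple s * w) = cs.length (longest cs a b) + cs.length x) :
    HasBraidFactorization cs w s := by
  have hne : a ≠ b := by
    rintro rfl
    simp at hab
  have ha : cs.IsLeftDescent (cs.simple s * w) a := by
    rw [hx] at hxlen ⊢
    exact isLeftDescent_longest_mul hab hxlen
  have hb : cs.IsLeftDescent (cs.simple s * w) b := by
    rw [hx, longest_comm] at hxlen ⊢
    exact isLeftDescent_longest_mul (by rwa [M.symmetric]) hxlen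
  obtain rfl | hsa := eq_or_ne s a
  · exact hasBraidFactorization_of_isLeftDescent hlen hne hb (by lia)
  obtain rfl | hsb := eq_or_ne s b
  · exact hasBraidFactorization_of_isLeftDescent hlen hne.symm ha (by rw [M.symmetric]; lia)
  by_cases hMa : M s a = 2
  swap
  · exact hasBraidFactorization_of_isLeftDescent hlen hsa ha hMa
  by_cases hMb : M s b = 2
  swap
  · exact hasBraidFactorization_of_isLeftDescent hlen hsb hb hMb
  have hdesc {c : B} (h : ∃ x, w = cs.simple c * x ∧ cs.length w = cs.length x + 1) :
      cs.IsLeftDescent w c := by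
    obtain ⟨y, rfl, hy⟩ := h
    simp [IsLeftDescent, hy]
  obtain ⟨-, y, hy, hylen⟩ := exists_eq_longest_mul cs hne
    (hdesc (exists_eq_simple_mul_of_isLeftDescent hlen hsa ha hMa))
    (hdesc (exists_eq_simple_mul_of_isLeftDescent hlen hsb hb hMb))
  refine absurd (isComplex_of_eq_mul_longest_mul cs (ω := []) (x₂ := y) hab ?_ ?_) hw
  · rw [hy, altProd_eq_longest, wordProd_nil, one_mul]
  · have := length_altProd_le cs a b (M a b)
    rw [altProd_eq_longest] at this
    simp only [List.length_nil]
    lia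

theorem hasBraidFactorization_of_fullyComm {a b : B} {x : W} {ω : List B} (hw : FullyComm cs w)
    (hlen : cs.length w < cs.length (cs.simple s * w)) (hab : 3 ≤ M a b)
    (hx : cs.simple s * w = cs.wordProd ω * longest cs a b * x)
    (hxlen : cs.length (cs.simple s * w) =
      ω.length + cs.length (longest cs a b) + cs.length x) :
    HasBraidFactorization cs w s := by
  induction ω generalizing w with
  | nil =>
    exact hasBraidFactorization_of_eq_longest_mul hw hlen hab (by simpa using hx)
      (by simpa using hxlen)
  | cons c ω ih =>
    have hsw := cs.length_simple_mul w s
    rw [List.length_cons] at hxlen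
    rw [wordProd_cons, mul_assoc, mul_assoc, ← mul_assoc (cs.wordProd ω)] at hx
    obtain rfl | hsc := eq_or_ne s c
    · rw [mul_right_inj] at hx
      exact absurd (isComplex_of_eq_mul_longest_mul cs hab hx (by lia)) hw
    have hcx : cs.simple c * (cs.simple s * w) = cs.wordProd ω * longest cs a b * x := by
      rw [hx, simple_mul_simple_cancel_left]
    have hc : cs.IsLeftDescent (cs.simple s * w) c := by
      have h₁ := cs.length_mul_le (cs.wordProd ω * longest cs a b) x
      have h₂ := cs.length_mul_le (cs.wordProd ω) (longest cs a b)
      have h₃ := cs.length_wordProd_le ω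
      rw [IsLeftDescent, hcx]
      lia
    by_cases hM : M s c = 2
    swap
    · exact hasBraidFactorization_of_isLeftDescent hlen hsc hc hM
    obtain ⟨y, rfl, hy⟩ := exists_eq_simple_mul_of_isLeftDescent hlen hsc hc hM
    have hcomm : cs.simple c * (cs.simple s * (cs.simple c * y)) = cs.simple s * y := by
      rw [(commute_simple_of_eq_two cs hM).left_comm, simple_mul_simple_cancel_left]
    have hcdesc := cs.isLeftDescent_iff.mp hc
    rw [hcomm] at hcx hcdesc
    obtain ⟨t, ht, l, w₃, hl, hyeq, hylen⟩ := ih (w := y)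
      (fun h ↦ hw (IsComplex.simple_mul cs h (by lia))) (by lia) hcx (by lia)
    refine ⟨t, ht, c :: l, w₃, ?_, ?_, ?_⟩
    · simpa [hsc.symm, hM] using hl
    · rw [hyeq, wordProd_cons]; simp only [mul_assoc]
    · rw [hy, hylen, List.length_cons]; lia

end

end CoxeterSystem

/-- Lemma 4.5(i): if `w` is fully commutative, `ℓ(sw) > ℓ(w)` and `sw` is not fully
commutative, then there are `t ∈ S` with `3 ≤ m(s,t) < ∞` and a reduced factorization
`w = w₁ · w₂ · w₃` where every generator occurring in a reduced word for `w₁` is distinct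
from `s` and commutes with `s`, and `w₂` is the alternating product `t s t s ⋯` of length
`m(s,t) − 1` beginning with `t`; consequently `sw` admits reduced factorizations
`s · w₁ · w₂ · w₃` and `w₁ · (s w₂) · w₃`. -/
theorem statement0 (w : W) (s : B) (hw : FullyComm cs w)
    (hlen : cs.length w < cs.length (cs.simple s * w))
    (hsw : ¬ FullyComm cs (cs.simple s * w)) :
    ∃ t : B, 3 ≤ M s t ∧ ∃ w₁ w₃ : W,
      w = w₁ * altProd cs t s (M s t - 1) * w₃ ∧
      cs.length w =
        cs.length w₁ + cs.length (altProd cs t s (M s t - 1) : W) + cs.length w₃ ∧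
      (∀ l : List B, cs.IsReduced l → cs.wordProd l = w₁ → ∀ u ∈ l, u ≠ s ∧ M s u = 2) ∧
      cs.length (cs.simple s * w) =
        1 + cs.length w₁ + cs.length (altProd cs t s (M s t - 1) : W) + cs.length w₃ ∧
      cs.simple s * w = w₁ * (cs.simple s * altProd cs t s (M s t - 1)) * w₃ ∧
      cs.length (cs.simple s * w) =
        cs.length w₁ + cs.length (cs.simple s * altProd cs t s (M s t - 1) : W) +
          cs.length w₃ := by
  obtain ⟨a, b, hab, x₁, x₂, hx, hxlen⟩ := not_not.mp hsw
  obtain ⟨ω, hω, rfl⟩ := cs.exists_isReduced x₁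
  rw [hω.eq] at hxlen
  obtain ⟨t, ht, l, w₃, hl, hweq, hwlen⟩ :=
    hasBraidFactorization_of_fullyComm hw hlen hab hx hxlen
  have hcomm : Commute (cs.simple s) (cs.wordProd l) :=
    Commute.list_prod_right _ _ fun x hx ↦ by
      obtain ⟨u, hu, rfl⟩ := List.mem_map.mp hx
      exact commute_simple_of_eq_two cs (hl u hu).2
  have hsweq : cs.simple s * w =
      cs.wordProd l * (cs.simple s * altProd cs t s (M s t - 1)) * w₃ := by
    rw [hweq, ← mul_assoc, ← mul_assoc, hcomm.eq]
    simp only [mul_assoc]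
  have hsw := cs.length_simple_mul w s
  have hl_le := cs.length_wordProd_le l
  have halt_le := length_altProd_le cs t s (M s t - 1)
  have h₁ := cs.length_mul_le (cs.wordProd l * altProd cs t s (M s t - 1)) w₃
  have h₂ := cs.length_mul_le (cs.wordProd l) (altProd cs t s (M s t - 1))
  rw [← hweq] at h₁
  have h₃ := cs.length_mul_le
    (cs.wordProd l * (cs.simple s * altProd cs t s (M s t - 1))) w₃
  have h₄ := cs.length_mul_le (cs.wordProd l) (cs.simple s * altProd cs t s (M s t - 1))
  have h₅ := cs.length_mul_le (cs.simple s) (altProd cs t s (M s t - 1))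
  rw [← hsweq] at h₃
  rw [length_simple] at h₅
  have hlred : cs.IsReduced l := by rw [CoxeterSystem.IsReduced]; lia
  refine ⟨t, ht, cs.wordProd l, w₃, hweq, by lia, fun l' hl' hprod u hu ↦ ?_, by lia, hsweq,
    by lia⟩
  exact hl u (mem_of_wordProd_eq cs hl' hlred hprod hu)
end

section
/- Let (W, S) be an arbitrary Coxeter system, let w ∈ W_c and s ∈ S be such that sw is weakly complex (i.e. ℓ(sw) > ℓ(w) and sw ∉ W_c). If u ∈ S and y ∈ W are such that w = uy reduced or w = yu reduced, then either sy ∈ W_c or sy is weakly complex. -/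
open CoxeterSystem

variable {B W : Type*} [Group W] {M : CoxeterMatrix B} (cs : CoxeterSystem M W)

/-- A reduced product with a complex right factor is complex. -/
theorem IsComplex.mul_left {x y : W} (hy : IsComplex cs y)
    (h : cs.length (x * y) = cs.length x + cs.length y) : IsComplex cs (x * y) := by
  obtain ⟨s, t, hst, x₁, x₂, rfl, hl⟩ := hy
  refine ⟨s, t, hst, x * x₁, x₂, by simp only [mul_assoc], ?_⟩
  have hle := cs.length_mul_le x x₁
  have hle₁ := cs.length_mul_le (x * x₁ * longest cs s t) x₂
  have hle₂ := cs.length_mul_le (x * x₁) (longest cs s t)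
  simp only [mul_assoc] at *
  omega

/-- A reduced product with a complex left factor is complex. -/
theorem IsComplex.mul_right {x y : W} (hx : IsComplex cs x)
    (h : cs.length (x * y) = cs.length x + cs.length y) : IsComplex cs (x * y) := by
  obtain ⟨s, t, hst, x₁, x₂, rfl, hl⟩ := hx
  refine ⟨s, t, hst, x₁, x₂ * y, by simp only [mul_assoc], ?_⟩
  have hle := cs.length_mul_le x₂ y
  have hle₁ := cs.length_mul_le x₁ (longest cs s t * (x₂ * y))
  have hle₂ := cs.length_mul_le (longest cs s t) (x₂ * y)
  simp only [mul_assoc] at *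
  omega

/-- Lemma 4.5(iii): let `w` be fully commutative and `s ∈ S` with `sw` weakly complex
(i.e. `ℓ(sw) > ℓ(w)` and `sw ∉ W_c`).  If `u ∈ S` and `y ∈ W` are such that `w = u·y`
reduced or `w = y·u` reduced, then `sy` is fully commutative or `sy` is weakly complex. -/
theorem statement2 (w : W) (s : B) (hw : FullyComm cs w)
    (h1 : cs.length w < cs.length (cs.simple s * w))
    (h2 : ¬ FullyComm cs (cs.simple s * w))
    (u : B) (y : W)
    (huy : (w = cs.simple u * y ∧ cs.length w = 1 + cs.length y) ∨
           (w = y * cs.simple u ∧ cs.length w = cs.length y + 1)) :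
    FullyComm cs (cs.simple s * y) ∨ IsWeaklyComplex cs (cs.simple s * y) := by
  have hy : FullyComm cs y := by
    intro hc
    rcases huy with ⟨rfl, hl⟩ | ⟨rfl, hl⟩
    · exact hw (hc.mul_left cs (by rw [hl, cs.length_simple]))
    · exact hw (hc.mul_right cs (by rw [hl, cs.length_simple]))
  rcases cs.length_simple_mul y s with hl | hl
  · by_cases hc : IsComplex cs (cs.simple s * y)
    · exact Or.inr ⟨hc, s, y, hy, rfl, by omega⟩
    · exact Or.inl hc
  · refine Or.inl fun hc => hy ?_
    have hsy := hc.mul_left cs (x := cs.simple s) (by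
      rw [cs.simple_mul_simple_cancel_left, cs.length_simple]; omega)
    rwa [cs.simple_mul_simple_cancel_left] at hsy
end
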